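/- If H₁ and H₂ are subgroups of PSL(2,11) of index 11 that are not conjugate in PSL(2,11), then for every conjugacy class C of PSL(2,11) one has |C ∩ H₁| = |C ∩ H₂|; that is, (H₁, H₂) is an almost conjugate (Sunada) pair in PSL(2,11). -/

import Mathlib

/-- `SL(2, 𝔽_p)`: the group of 2×2 matrices of determinant 1 over `ℤ/pℤ`. -/
abbrev SL2 (p : ℕ) := Matrix.SpecialLinearGroup (Fin 2) (ZMod p)

/-- `PSL(2, 𝔽_p)`: the quotient of `SL(2, 𝔽_p)` by its center `{±I}`. -/
abbrev PSL2 (p : ℕ) := SL2 p ⧸ Subgroup.center (SL2 p)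

namespace Sunada

abbrev Z := ZMod 11

/-- sign-normalised key -/
def key0 (b c t : Z) : Fin 8 :=
  if t = 0 then 0 else if t = 1 then 1 else if t = 3 then 2 else if t = 4 then 3
  else if t = 5 then 4 else
    let s := if c = 0 then (-b)^5 else c^5
    if s = 0 then 5 else if s = 1 then 6 else 7

def isPos (t : Z) : Bool := t = 0 ∨ t = 1 ∨ t = 2 ∨ t = 3 ∨ t = 4 ∨ t = 5

def key (a b c d : Z) : Fin 8 :=
  if isPos (a + d) then key0 b c (a+d) else key0 (-b) (-c) (-(a+d))

theorem qf1 : ∀ c e b : Z, e*e+4*b*c ≠ 0 → ∃ x y : Z, c*x*x+e*x*y-b*y*y = 1 := by decide +kernel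

theorem qf2 : ∀ c e b : Z, e*e+4*b*c = 0 → (if c = 0 then (-b)^5 else c^5) = 1 → ∃ x y : Z, c*x*x+e*x*y-b*y*y = 1 := by decide +kernel
theorem qf3 : ∀ c e b : Z, e*e+4*b*c = 0 → (if c = 0 then (-b)^5 else c^5) ≠ 1 → (if c = 0 then (-b)^5 else c^5) ≠ 0 → ∃ x y : Z, c*x*x+e*x*y-b*y*y = -1 := by decide +kernel
theorem qf4 : ∀ c e b : Z, e*e+4*b*c = 0 → (if c = 0 then (-b)^5 else c^5) = 0 → b = 0 ∧ c = 0 ∧ e = 0 := by decide +kernel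

def S : Finset (Z × Z × Z × Z) := Finset.univ.filter fun p => p.1 * p.2.2.2 - p.2.1 * p.2.2.1 = 1
theorem cnt : ∀ k, (S.filter fun p => key p.1 p.2.1 p.2.2.1 p.2.2.2 = k).card = ![110,220,264,264,220,2,120,120] k := by decide +kernel

/-- number of fixed points of a permutation -/
noncomputable def fx {X : Type*} (σ : Equiv.Perm X) : ℕ := Nat.card {q // σ q = q}

theorem fx_conj {X : Type*} (σ τ : Equiv.Perm X) : fx (τ * σ * τ⁻¹) = fx σ := by
  unfold fx
  refine Nat.card_congr (Equiv.subtypeEquiv τ⁻¹ ?_)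
  intro q
  simp only [Equiv.Perm.mul_apply]
  exact (Equiv.eq_symm_apply τ).symm

theorem fx_pow {X : Type*} [Finite X] (σ : Equiv.Perm X) (p : ℕ) (hp : p.Prime) :
    fx (σ ^ p) ≡ fx σ [MOD p] := by
  classical
  have := Fact.mk hp
  have := Fintype.ofFinite X
  let Y := {q // (σ ^ p) q = q}
  have hst : ∀ q : X, (σ ^ p) q = q → (σ ^ p) (σ q) = σ q := by
    intro q hq
    rw [← Equiv.Perm.mul_apply, ← pow_succ, pow_succ', Equiv.Perm.mul_apply, hq]
  let τ : Function.End Y := fun q => ⟨σ q.1, hst q.1 q.2⟩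
  have hτ : ∀ (n : ℕ) (q : Y), ((τ ^ n) q).1 = (σ ^ n) q.1 := by
    intro n
    induction n with
    | zero => intro q; rfl
    | succ k ih =>
      intro q
      rw [pow_succ', pow_succ', Equiv.Perm.mul_apply, ← ih]
      rfl
  have h1 : τ ^ p ^ 1 = 1 := by
    funext q
    apply Subtype.ext
    rw [hτ, pow_one]
    exact q.2
  have h := Equiv.Perm.card_fixedPoints_modEq h1
  have e1 : fx (σ ^ p) = Fintype.card Y := Nat.card_eq_fintype_card
  have e2 : fx σ = Fintype.card (Function.fixedPoints τ) := by
    rw [← Nat.card_eq_fintype_card]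
    refine Nat.card_congr ⟨fun q => ⟨⟨q.1, ?_⟩, ?_⟩, fun q => ⟨q.1.1, ?_⟩, ?_, ?_⟩
    · have : ∀ n : ℕ, (σ ^ n) q.1 = q.1 := by
        intro n
        induction n with
        | zero => rfl
        | succ k ih => rw [pow_succ, Equiv.Perm.mul_apply, q.2, ih]
      exact this p
    · exact Subtype.ext q.2
    · exact congrArg Subtype.val q.2
    · intro q; rfl
    · intro q; rfl
  rw [e1, e2]
  exact h

theorem fx_one {X : Type*} : fx (1 : Equiv.Perm X) = Nat.card X :=
  Nat.card_congr (Equiv.subtypeUnivEquiv fun _ => rfl)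

/-- companion matrix of trace `t` -/
def comp (t : Z) : SL2 11 := ⟨!![0, -1; 1, t], by simp [Matrix.det_fin_two]⟩
/-- the other companion matrix of trace `t` -/
def coNeg (t : Z) : SL2 11 := ⟨!![0, 1; -1, t], by simp [Matrix.det_fin_two]⟩

theorem exists_mat (a b c d : Z) (h : a * d - b * c = 1) :
    ∃ P : SL2 11, P 0 0 = a ∧ P 0 1 = b ∧ P 1 0 = c ∧ P 1 1 = d :=
  ⟨⟨!![a, b; c, d], by rw [Matrix.det_fin_two_of]; exact h⟩, rfl, rfl, rfl, rfl⟩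

theorem mul_coe (g h : SL2 11) (i j : Fin 2) : (g * h) i j = g i 0 * h 0 j + g i 1 * h 1 j := by
  rw [Matrix.SpecialLinearGroup.coe_mul, Matrix.mul_apply, Fin.sum_univ_two]

theorem comp_coe (t : Z) : comp t 0 0 = 0 ∧ comp t 0 1 = -1 ∧ comp t 1 0 = 1 ∧ comp t 1 1 = t :=
  ⟨rfl, rfl, rfl, rfl⟩

theorem coNeg_coe (t : Z) :
    coNeg t 0 0 = 0 ∧ coNeg t 0 1 = 1 ∧ coNeg t 1 0 = -1 ∧ coNeg t 1 1 = t :=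
  ⟨rfl, rfl, rfl, rfl⟩

theorem conj_comp (g : SL2 11) (x y : Z)
    (h : g 1 0 * x * x + (g 1 1 - g 0 0) * x * y - g 0 1 * y * y = 1) :
    ∃ P : SL2 11, g = P * comp (g 0 0 + g 1 1) * P⁻¹ := by
  have hd := g.det_coe
  rw [Matrix.det_fin_two] at hd
  obtain ⟨P, p0, p1, p2, p3⟩ := exists_mat x ((g 0 0 * x + g 0 1 * y)) y ((g 1 0 * x + g 1 1 * y))
    (by linear_combination h)
  obtain ⟨c0, c1, c2, c3⟩ := comp_coe (g 0 0 + g 1 1)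
  refine ⟨P, eq_mul_inv_of_mul_eq ?_⟩
  ext i j
  fin_cases i <;> fin_cases j <;>
    simp only [Fin.zero_eta, Fin.mk_one, Fin.isValue, mul_coe, p0, p1, p2, p3, c0, c1, c2, c3]
  · ring
  · linear_combination (-x) * hd
  · ring
  · linear_combination (-y) * hd

theorem conj_coNeg (g : SL2 11) (x y : Z)
    (h : g 1 0 * x * x + (g 1 1 - g 0 0) * x * y - g 0 1 * y * y = -1) :
    ∃ P : SL2 11, g = P * coNeg (g 0 0 + g 1 1) * P⁻¹ := by
  have hd := g.det_coe
  rw [Matrix.det_fin_two] at hd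
  obtain ⟨P, p0, p1, p2, p3⟩ := exists_mat x (-(g 0 0 * x + g 0 1 * y)) y (-(g 1 0 * x + g 1 1 * y))
    (by linear_combination -h)
  obtain ⟨c0, c1, c2, c3⟩ := coNeg_coe (g 0 0 + g 1 1)
  refine ⟨P, eq_mul_inv_of_mul_eq ?_⟩
  ext i j
  fin_cases i <;> fin_cases j <;>
    simp only [Fin.zero_eta, Fin.mk_one, Fin.isValue, mul_coe, p0, p1, p2, p3, c0, c1, c2, c3]
  · ring
  · linear_combination (x) * hd
  · ring
  · linear_combination (y) * hd

/-- class representatives -/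
def rep : Fin 8 → SL2 11 := ![comp 0, comp 1, comp 3, comp 4, comp 5, 1, comp 2, coNeg 2]

/-- the key of a matrix -/
def keyg (g : SL2 11) : Fin 8 := key (g 0 0) (g 0 1) (g 1 0) (g 1 1)

theorem pos_cases : ∀ t : Z, isPos t = true →
    t = 2 ∨ ((t = 0 ∨ t = 1 ∨ t = 3 ∨ t = 4 ∨ t = 5) ∧ t * t - 4 ≠ 0 ∧
      ∀ b c, rep (key0 b c t) = comp t) := by
  intro t ht
  have : t = 2 ∨ ((t = 0 ∨ t = 1 ∨ t = 3 ∨ t = 4 ∨ t = 5) ∧ t * t - 4 ≠ 0) := by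
    revert t; decide +kernel
  rcases this with h | ⟨h, h'⟩
  · exact Or.inl h
  · refine Or.inr ⟨h, h', ?_⟩
    intro b c
    rcases h with rfl | rfl | rfl | rfl | rfl <;> rfl

theorem neg_pos : ∀ t : Z, isPos t = false → isPos (-t) = true := by decide +kernel

theorem rep_pos (g : SL2 11) (hg : isPos (g 0 0 + g 1 1) = true) :
    ∃ P : SL2 11, g = P * rep (key0 (g 0 1) (g 1 0) (g 0 0 + g 1 1)) * P⁻¹ := by
  have hd := g.det_coe
  rw [Matrix.det_fin_two] at hd
  rcases pos_cases _ hg with ht | ⟨_, ht, hr⟩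
  · have hz : (g 1 1 - g 0 0) * (g 1 1 - g 0 0) + 4 * g 0 1 * g 1 0 = 0 := by
      linear_combination (g 0 0 + g 1 1 + 2) * ht - 4 * hd
    have hk : ∀ b c : Z, rep (key0 b c 2) =
        if (if c = 0 then (-b)^5 else c^5) = 0 then 1 else
        if (if c = 0 then (-b)^5 else c^5) = 1 then comp 2 else coNeg 2 := by
      intro b c
      have e : key0 b c 2 = if (if c = 0 then (-b)^5 else c^5) = 0 then 5 else
        if (if c = 0 then (-b)^5 else c^5) = 1 then 6 else 7 := rfl
      rw [e]
      split_ifs <;> rfl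
    rw [ht, hk]
    have q2 := qf2 _ _ _ hz
    have q3 := qf3 _ _ _ hz
    have q4 := qf4 _ _ _ hz
    generalize (if g 1 0 = 0 then (-g 0 1)^5 else g 1 0 ^5) = s at *
    split_ifs with h0 h1
    · obtain ⟨hb, hc, he⟩ := q4 h0
      have ha : g 0 0 = 1 := by
        have h12 : (2 : Z) * 6 = 1 := by decide
        linear_combination 6 * ht - 6 * he + (1 - g 0 0) * h12
      have hdd : g 1 1 = 1 := by linear_combination he + ha
      refine ⟨1, ?_⟩
      ext i j
      fin_cases i <;> fin_cases j <;> simp [ha, hb, hc, hdd]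
    · obtain ⟨x, y, h⟩ := q2 h1
      obtain ⟨P, hP⟩ := conj_comp g x y h
      exact ⟨P, by rw [ht] at hP; exact hP⟩
    · obtain ⟨x, y, h⟩ := q3 h1 h0
      obtain ⟨P, hP⟩ := conj_coNeg g x y h
      exact ⟨P, by rw [ht] at hP; exact hP⟩
  · rw [hr]
    obtain ⟨x, y, h⟩ := qf1 (g 1 0) (g 1 1 - g 0 0) (g 0 1) (by
      intro h; apply ht; linear_combination h + 4 * hd)
    exact conj_comp g x y h

theorem rep_all (g : SL2 11) :
    ∃ P : SL2 11, g = P * rep (keyg g) * P⁻¹ ∨ -g = P * rep (keyg g) * P⁻¹ := by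
  unfold keyg key
  split_ifs with h
  · obtain ⟨P, hP⟩ := rep_pos g h
    exact ⟨P, Or.inl hP⟩
  · have h' := neg_pos _ (by simpa using h)
    have e : (-g) 0 0 + (-g) 1 1 = -(g 0 0 + g 1 1) := by simp; ring
    obtain ⟨P, hP⟩ := rep_pos (-g) (by rw [e]; exact h')
    refine ⟨P, Or.inr ?_⟩
    rw [e] at hP
    simpa using hP

theorem sum_key (W : Fin 8 → ℕ) : ∑ g : SL2 11, W (keyg g) =
    110 * W 0 + 220 * W 1 + 264 * W 2 + 264 * W 3 + 220 * W 4 + 2 * W 5 + 120 * W 6 + 120 * W 7 := by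
  have h1 : ∑ g : SL2 11, W (keyg g) = ∑ p ∈ S, W (key p.1 p.2.1 p.2.2.1 p.2.2.2) := by
    refine Finset.sum_bij (fun g _ => (g 0 0, g 0 1, g 1 0, g 1 1)) ?_ ?_ ?_ ?_
    · intro g _
      have hd := g.det_coe
      rw [Matrix.det_fin_two] at hd
      simp [S, hd]
    · intro g _ g' _ h
      simp only [Prod.mk.injEq] at h
      ext i j
      fin_cases i <;> fin_cases j <;> simp [h]
    · rintro ⟨a, b, c, d⟩ h
      obtain ⟨P, p0, p1, p2, p3⟩ := exists_mat a b c d (by simpa [S] using h)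
      exact ⟨P, @Finset.mem_univ _ _ P, by rw [p0, p1, p2, p3]⟩
    · intro g _; rfl
  rw [h1, ← Finset.sum_fiberwise S (fun p => key p.1 p.2.1 p.2.2.1 p.2.2.2)]
  have h2 : ∀ k, ∑ p ∈ S with key p.1 p.2.1 p.2.2.1 p.2.2.2 = k,
      W (key p.1 p.2.1 p.2.2.1 p.2.2.2) = ![110,220,264,264,220,2,120,120] k * W k := by
    intro k
    rw [← cnt k, ← smul_eq_mul]
    apply Finset.sum_eq_card_nsmul
    intro p hp
    rw [(Finset.mem_filter.mp hp).2]
  simp only [h2]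
  simp [Fin.sum_univ_eight]

theorem burnside {G X : Type*} [Group G] [Fintype G] [Finite X]
    (φ : G →* Equiv.Perm X) (htr : ∀ x y : X, ∃ g, φ g x = y) (x₀ : X) :
    ∑ g : G, fx (φ g) = ∑ _g : G, 1 := by
  classical
  have := Fintype.ofFinite X
  let : MulAction G X := MulAction.compHom X φ
  have : MulAction.IsPretransitive G X := ⟨htr⟩
  have h := MulAction.sum_card_fixedBy_eq_card_orbits_mul_card_group G X
  have h1 : Fintype.card (Quotient (MulAction.orbitRel G X)) = 1 := by
    rw [Fintype.card_eq_one_iff]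
    refine ⟨Quotient.mk _ x₀, ?_⟩
    intro y
    induction y using Quotient.inductionOn with
    | h y => exact Quotient.sound (htr x₀ y)
  rw [h1] at h
  refine Eq.trans ?_ (h.trans (by simp))
  refine Finset.sum_congr rfl fun g _ => ?_
  rw [← Nat.card_eq_fintype_card]
  rfl

section perm
variable {X : Type*} [Finite X] (φ : SL2 11 →* Equiv.Perm X)

theorem fx_rep (hneg : ∀ g, φ (-g) = φ g) (g : SL2 11) : fx (φ g) = fx (φ (rep (keyg g))) := by
  obtain ⟨P, h | h⟩ := rep_all g
  · conv_lhs => rw [h, map_mul, map_mul, map_inv, fx_conj]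
  · rw [← hneg]
    conv_lhs => rw [h, map_mul, map_mul, map_inv, fx_conj]

theorem fx_val (hneg : ∀ g, φ (-g) = φ g) (htr : ∀ x y : X, ∃ g, φ g x = y)
    (hX : Nat.card X = 11) (k : Fin 8) :
    fx (φ (rep k)) = ![3, 2, 1, 1, 0, 11, 0, 0] k := by
  have hne : Nonempty X := by
    by_contra h
    rw [not_nonempty_iff] at h
    simp at hX
  have hs := burnside φ htr hne.some
  rw [Finset.sum_congr rfl (fun g _ => fx_rep φ hneg g), sum_key (fun k => fx (φ (rep k))),
    sum_key (fun _ => 1)] at hs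
  have hm1 : φ (-1) = 1 := by rw [hneg, map_one]
  have key1 : ∀ (g : SL2 11) (p : ℕ), p.Prime → (g ^ p = 1 ∨ g ^ p = -1) →
      11 ≡ fx (φ g) [MOD p] := by
    intro g p hp h
    have := fx_pow (φ g) p hp
    have e : φ g ^ p = 1 := by
      rw [← map_pow]
      rcases h with h | h
      · rw [h, map_one]
      · rw [h, hm1]
    rwa [e, fx_one, hX] at this
  have a0 := key1 (rep 0) 2 (by norm_num) (by decide +kernel)
  have a1 := key1 (rep 1) 3 (by norm_num) (by decide +kernel)
  have a2 := key1 (rep 2) 5 (by norm_num) (by decide +kernel)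
  have a3 := key1 (rep 3) 5 (by norm_num) (by decide +kernel)
  have a6 := key1 (rep 6) 11 (by norm_num) (by decide +kernel)
  have a7 := key1 (rep 7) 11 (by norm_num) (by decide +kernel)
  have a5 : fx (φ (rep 5)) = 11 := by
    have : rep 5 = 1 := rfl
    rw [this, map_one, fx_one, hX]
  have a4 := fx_pow (φ (rep 4)) 2 (by norm_num)
  rw [← map_pow, fx_rep φ hneg (rep 4 ^ 2), (by decide +kernel : keyg (rep 4 ^ 2) = 1)] at a4
  unfold Nat.ModEq at *
  have : fx (φ (rep 0)) = 3 ∧ fx (φ (rep 1)) = 2 ∧ fx (φ (rep 2)) = 1 ∧ fx (φ (rep 3)) = 1 ∧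
    fx (φ (rep 4)) = 0 ∧ fx (φ (rep 6)) = 0 ∧ fx (φ (rep 7)) = 0 := by
    generalize fx (φ (rep 0)) = f0 at *
    generalize fx (φ (rep 1)) = f1 at *
    generalize fx (φ (rep 2)) = f2 at *
    generalize fx (φ (rep 3)) = f3 at *
    generalize fx (φ (rep 4)) = f4 at *
    generalize fx (φ (rep 5)) = f5 at *
    generalize fx (φ (rep 6)) = f6 at *
    generalize fx (φ (rep 7)) = f7 at *
    have b6 : f6 = 0 := by omega
    have b7 : f7 = 0 := by omega
    have b2 : f2 = 1 := by omega
    have b3 : f3 = 1 := by omega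
    have b1 : f1 = 2 := by omega
    omega
  obtain ⟨c0, c1, c2, c3, c4, c6, c7⟩ := this
  fin_cases k
  exacts [c0, c1, c2, c3, c4, a5, c6, c7]

end perm

theorem count {G : Type*} [Group G] [Finite G] (H : Subgroup G) (x : G) :
    H.index * Nat.card {y : G // IsConj x y ∧ y ∈ H} =
      Nat.card {y : G // IsConj x y} * fx (MulAction.toPermHom G (G ⧸ H) x) := by
  let T := {z : (G ⧸ H) × G // IsConj x z.2 ∧ z.2 • z.1 = z.1}
  have e1 : Nat.card T = H.index * Nat.card {y : G // IsConj x y ∧ y ∈ H} := by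
    rw [Subgroup.index, ← Nat.card_prod]
    refine Nat.card_congr ⟨fun z => (z.1.1, ⟨z.1.1.out⁻¹ * z.1.2 * z.1.1.out, ?_, ?_⟩),
      fun w => ⟨(w.1, w.1.out * w.2.1 * w.1.out⁻¹), ?_, ?_⟩, ?_, ?_⟩
    · refine z.2.1.trans (isConj_iff.mpr ⟨z.1.1.out⁻¹, by simp⟩)
    · have h := z.2.2
      rw [← QuotientGroup.out_eq' z.1.1] at h
      have h' := QuotientGroup.eq.mp (h.symm : _ = ((z.1.2 * z.1.1.out : G) : G ⧸ H))
      rw [mul_assoc]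
      exact h'
    · exact w.2.2.1.trans (isConj_iff.mpr ⟨_, rfl⟩)
    · have h : ((w.1.out * w.2.1 * w.1.out⁻¹ * w.1.out : G) : G ⧸ H) = (w.1.out : G ⧸ H) :=
        (QuotientGroup.eq.mpr (by simpa using w.2.2.2)).symm
      rw [QuotientGroup.out_eq'] at h
      calc (w.1.out * w.2.1 * w.1.out⁻¹) • w.1 =
          (w.1.out * w.2.1 * w.1.out⁻¹) • ((w.1.out : G) : G ⧸ H) := by
            rw [QuotientGroup.out_eq']
        _ = w.1 := h
    · intro z
      apply Subtype.ext
      ext <;> simp [mul_assoc]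
    · intro w
      ext <;> simp [mul_assoc]
  have e2 : Nat.card T = Nat.card {y : G // IsConj x y} * fx (MulAction.toPermHom G (G ⧸ H) x) := by
    have : ∀ y : {y : G // IsConj x y}, ∃ g : G, g * x * g⁻¹ = y.1 := fun y => isConj_iff.mp y.2
    choose c hc using this
    unfold fx
    rw [← Nat.card_prod]
    refine Nat.card_congr ⟨fun z => (⟨z.1.2, z.2.1⟩, ⟨(c ⟨z.1.2, z.2.1⟩)⁻¹ • z.1.1, ?_⟩),
      fun w => ⟨(c w.1 • w.2.1, w.1.1), w.1.2, ?_⟩, ?_, ?_⟩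
    · have h := z.2.2
      have h2 := hc ⟨z.1.2, z.2.1⟩
      simp only at h2
      rw [← h2] at h
      change x • ((c ⟨z.1.2, z.2.1⟩)⁻¹ • z.1.1) = _
      rw [eq_inv_smul_iff, smul_smul, smul_smul]
      exact h
    · have h : x • w.2.1 = w.2.1 := w.2.2
      change w.1.1 • c w.1 • w.2.1 = c w.1 • w.2.1
      rw [← hc w.1, smul_smul]
      simp only [inv_mul_cancel_right]
      rw [mul_smul, h]
    · intro z
      apply Subtype.ext
      ext <;> simp
    · rintro ⟨w1, w2⟩
      ext <;> simp
  rw [← e1, e2]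

theorem final (H : Subgroup (PSL2 11)) (h : H.index = 11) (g : SL2 11) :
    fx (MulAction.toPermHom (PSL2 11) (PSL2 11 ⧸ H) (QuotientGroup.mk g)) =
      ![3, 2, 1, 1, 0, 11, 0, 0] (keyg g) := by
  let φ : SL2 11 →* Equiv.Perm (PSL2 11 ⧸ H) :=
    (MulAction.toPermHom (PSL2 11) (PSL2 11 ⧸ H)).comp (QuotientGroup.mk' _)
  have hneg : ∀ g, φ (-g) = φ g := by
    intro g
    have : (QuotientGroup.mk' (Subgroup.center (SL2 11))) (-g) = QuotientGroup.mk' _ g := by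
      refine (QuotientGroup.eq).mpr ?_
      rw [Subgroup.mem_center_iff]
      intro a
      simp
    simp only [φ, MonoidHom.comp_apply, this]
  have htr : ∀ x y, ∃ g, φ g x = y := by
    intro x y
    obtain ⟨g, hg⟩ := MulAction.exists_smul_eq (PSL2 11) x y
    obtain ⟨s, rfl⟩ := QuotientGroup.mk_surjective g
    exact ⟨s, hg⟩
  have := fx_rep φ hneg g
  rw [fx_val φ hneg htr h] at this
  exact this

end Sunada

/-- If `H₁` and `H₂` are subgroups of `PSL(2,11)` of index 11 that are not
conjugate in `PSL(2,11)`, then for every conjugacy class `C` of `PSL(2,11)` one has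
`|C ∩ H₁| = |C ∩ H₂|`; i.e. `(H₁, H₂)` is an almost conjugate (Sunada) pair. -/
theorem stmt_4 (H₁ H₂ : Subgroup (PSL2 11))
    (h₁ : H₁.index = 11) (h₂ : H₂.index = 11)
    (hnc : ¬ ∃ g : PSL2 11, Subgroup.map (MulAut.conj g).toMonoidHom H₁ = H₂) :
    ∀ x : PSL2 11, Nat.card {y : PSL2 11 // IsConj x y ∧ y ∈ H₁} =
      Nat.card {y : PSL2 11 // IsConj x y ∧ y ∈ H₂} := by
  intro x
  obtain ⟨g, rfl⟩ := QuotientGroup.mk_surjective x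
  have c1 := Sunada.count H₁ (QuotientGroup.mk g)
  have c2 := Sunada.count H₂ (QuotientGroup.mk g)
  rw [h₁, Sunada.final H₁ h₁] at c1
  rw [h₂, Sunada.final H₂ h₂] at c2
  exact Nat.eq_of_mul_eq_mul_left (by norm_num) (c1.trans c2.symm)
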